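/- For every μ ∈ P(E), the filter sequence (π_n^μ)_{n≥0} is a Markov chain with transition kernel Π under Q_μ: for every n ≥ 0 and every bounded continuous function f : P(E) → ℝ, the conditional expectation under Q_μ of f(π_{n+1}^μ) given the σ-algebra generated by the coordinates y_1, …, y_n equals Πf(π_n^μ), Q_μ-almost surely (with π_0^μ = μ). -/

import Mathlib

open MeasureTheory Filter Topology ENNReal

/-- `P(E)`: probability vectors on a countable set `E`, with the topology of
pointwise (equivalently, weak) convergence inherited from `E → ℝ`. -/
abbrev ProbVec (E : Type*) := {p : E → ℝ // (∀ i, 0 ≤ p i) ∧ HasSum p 1}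

/-- Row-vector/matrix product `(p M(y))_j = ∑_i p_i M_{ij}(y)`. -/
noncomputable def rowMul {E F : Type*} (M : F → E → E → ℝ) (p : E → ℝ) (y : F) : E → ℝ :=
  fun j => ∑' i, p i * M y i j

/-- Iterated product `p M(y₁)⋯M(yₙ)` along a list of observations. -/
noncomputable def rowIter {E F : Type*} (M : F → E → E → ℝ) (p : E → ℝ) (ys : List F) : E → ℝ :=
  ys.foldl (rowMul M) p

/-- `p 1 = ∑_j p_j`. -/
noncomputable def rowTot {E : Type*} (p : E → ℝ) : ℝ := ∑' j, p j

/-- One step of the filter: `μ ↦ μM(y)/(μM(y)1)` (junk value `μ` when undefined). -/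
noncomputable def filterStep {E F : Type*} (M : F → E → E → ℝ) (μ : ProbVec E) (y : F) :
    ProbVec E := by
  classical
  exact if h : ∃ ν : ProbVec E, ∀ j,
      (ν : E → ℝ) j * rowTot (rowMul M (μ : E → ℝ) y) = rowMul M (μ : E → ℝ) y j
    then h.choose else μ

/-- The filter `μM(y₁)⋯M(yₙ)/(μM(y₁)⋯M(yₙ)1)` (junk value `μ` when undefined). -/
noncomputable def filterList {E F : Type*} (M : F → E → E → ℝ) (μ : ProbVec E) (ys : List F) :
    ProbVec E := by
  classical
  exact if h : ∃ ν : ProbVec E, ∀ j,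
      (ν : E → ℝ) j * rowTot (rowIter M (μ : E → ℝ) ys) = rowIter M (μ : E → ℝ) ys j
    then h.choose else μ

/-- The filter `π_n^μ(y)` as a function of the observation path `y : ℕ → F`
(the coordinate `y k` represents the observation `y_{k+1}`). -/
noncomputable def filterSeq {E F : Type*} (M : F → E → E → ℝ) (μ : ProbVec E) (y : ℕ → F)
    (n : ℕ) : ProbVec E :=
  filterList M μ (List.ofFn fun k : Fin n => y k)

/-- The filter transition kernel `Π`, acting on functions:
`Πf(μ) = ∫ f(μM(y)/(μM(y)1)) ⬝ (μM(y)1) φ(dy)`. -/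
noncomputable def filterKernel {E F : Type*} [MeasurableSpace F] (M : F → E → E → ℝ)
    (φ : Measure F) (f : ProbVec E → ℝ) (μ : ProbVec E) : ℝ :=
  ∫ y, f (filterStep M μ y) * rowTot (rowMul M (μ : E → ℝ) y) ∂φ

/-- Bounded continuous real functions on `P(E)`. -/
def IsBddCont {E : Type*} (f : ProbVec E → ℝ) : Prop :=
  Continuous f ∧ ∃ C : ℝ, ∀ μ, |f μ| ≤ C

/-- A probability measure `𝕄` on `P(E)` is `Π`-invariant if `∫ Πf d𝕄 = ∫ f d𝕄`
for every bounded continuous `f`. -/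
def IsPiInvariant {E F : Type*} [MeasurableSpace F] (M : F → E → E → ℝ) (φ : Measure F)
    (𝕄 : ProbabilityMeasure (ProbVec E)) : Prop :=
  ∀ f : ProbVec E → ℝ, IsBddCont f →
    ∫ μ, filterKernel M φ f μ ∂(𝕄 : Measure (ProbVec E)) =
      ∫ μ, f μ ∂(𝕄 : Measure (ProbVec E))

/-- The signal transition matrix `P_{ij} = ∫ M_{ij}(y) φ(dy)`. -/
noncomputable def transMat {E F : Type*} [MeasurableSpace F] (M : F → E → E → ℝ)
    (φ : Measure F) : E → E → ℝ :=
  fun i j => ∫ y, M y i j ∂φ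

/-- Powers of a transition matrix on a countable state space. -/
noncomputable def matPow {E : Type*} [DecidableEq E] (P : E → E → ℝ) : ℕ → E → E → ℝ
  | 0 => fun i j => if i = j then 1 else 0
  | n + 1 => fun i j => ∑' k, matPow P n i k * P k j

theorem aux_meas_tsum {E X : Type*} [Countable E] [MeasurableSpace X] (g : X → E → ℝ)
    (hg : ∀ i, Measurable fun x => g x i) (h0 : ∀ x i, 0 ≤ g x i) :
    Measurable fun x => ∑' i, g x i := by
  have h : (fun x => ∑' i, g x i) = fun x => (∑' i, ENNReal.ofReal (g x i)).toReal := by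
    funext x
    rw [ENNReal.tsum_toReal_eq (fun i => ENNReal.ofReal_ne_top)]
    exact tsum_congr fun i => (ENNReal.toReal_ofReal (h0 x i)).symm
  rw [h]
  exact (Measurable.ennreal_tsum fun i => (hg i).ennreal_ofReal).ennreal_toReal

theorem aux_rowMul_nonneg {E F : Type*} (M : F → E → E → ℝ) (hM : ∀ y i j, 0 ≤ M y i j)
    (p : E → ℝ) (hp : ∀ i, 0 ≤ p i) (y : F) (j : E) : 0 ≤ rowMul M p y j :=
  tsum_nonneg fun i => mul_nonneg (hp i) (hM y i j)

theorem aux_rowMul_meas {E F X : Type*} [Countable E] [MeasurableSpace F] [MeasurableSpace X]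
    (M : F → E → E → ℝ) (hm : ∀ i j, Measurable fun y => M y i j)
    (hM : ∀ y i j, 0 ≤ M y i j) (u : X → E → ℝ) (hu : Measurable u) (hu0 : ∀ x i, 0 ≤ u x i)
    (g : X → F) (hg : Measurable g) : Measurable fun x => rowMul M (u x) (g x) := by
  refine measurable_pi_lambda _ fun j => ?_
  refine aux_meas_tsum (fun x i => u x i * M (g x) i j) (fun i => ?_) (fun x i => ?_)
  · exact ((measurable_pi_apply i).comp hu).mul ((hm i j).comp hg)
  · exact mul_nonneg (hu0 x i) (hM _ _ _)

theorem aux_rowIter_nonneg {E F : Type*} (M : F → E → E → ℝ) (hM : ∀ y i j, 0 ≤ M y i j)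
    (l : List F) : ∀ (p : E → ℝ), (∀ i, 0 ≤ p i) → ∀ j, 0 ≤ rowIter M p l j := by
  induction l with
  | nil => intro p hp j; exact hp j
  | cons y l ih => intro p hp j; exact ih _ (aux_rowMul_nonneg M hM p hp y) j

theorem aux_rowIter_snoc {E F : Type*} (M : F → E → E → ℝ) (p : E → ℝ) (n : ℕ)
    (v : Fin (n + 1) → F) : rowIter M p (List.ofFn v) =
      rowMul M (rowIter M p (List.ofFn fun k : Fin n => v k.castSucc)) (v (Fin.last n)) := by
  rw [List.ofFn_succ', List.concat_eq_append]
  simp [rowIter, List.foldl_append]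

theorem aux_rowIter_meas {E F : Type*} [Countable E] [MeasurableSpace F]
    (M : F → E → E → ℝ) (hm : ∀ i j, Measurable fun y => M y i j)
    (hM : ∀ y i j, 0 ≤ M y i j) (p : E → ℝ) (hp : ∀ i, 0 ≤ p i) (n : ℕ) :
    Measurable fun v : Fin n → F => rowIter M p (List.ofFn v) := by
  induction n with
  | zero => simp [rowIter]
  | succ n ih =>
    have : (fun v : Fin (n+1) → F => rowIter M p (List.ofFn v)) = fun v =>
      rowMul M (rowIter M p (List.ofFn fun k : Fin n => v k.castSucc)) (v (Fin.last n)) :=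
      funext fun v => aux_rowIter_snoc M p n v
    rw [this]
    refine aux_rowMul_meas M hm hM (fun v : Fin (n+1) → F =>
      rowIter M p (List.ofFn fun k : Fin n => v k.castSucc)) ?_
      (fun v i => aux_rowIter_nonneg M hM _ p hp i) _ (measurable_pi_apply _)
    exact ih.comp (measurable_pi_lambda _ fun k => measurable_pi_apply _)

theorem aux_rowTot_nonneg {E : Type*} (q : E → ℝ) (hq : ∀ i, 0 ≤ q i) : 0 ≤ rowTot q :=
  tsum_nonneg hq

theorem aux_hasSum {E : Type*} (q : E → ℝ) (h : rowTot q ≠ 0) :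
    HasSum (fun j => q j / rowTot q) 1 := by
  have hs : Summable q := by
    by_contra hc
    exact h (tsum_eq_zero_of_not_summable hc)
  have := hs.hasSum.div_const (rowTot q)
  rwa [show ∑' j, q j = rowTot q from rfl, div_self h] at this

open Classical in
noncomputable def auxNrm {E : Type*} (p0 : ProbVec E) (q : E → ℝ) : ProbVec E :=
  ⟨if (∀ j, 0 ≤ q j) ∧ rowTot q ≠ 0 then fun j => q j / rowTot q else p0.1, by
    split_ifs with h
    · exact ⟨fun j => div_nonneg (h.1 j) (aux_rowTot_nonneg q h.1), aux_hasSum q h.2⟩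
    · exact p0.2⟩

theorem auxNrm_val {E : Type*} (p0 : ProbVec E) (q : E → ℝ) (h0 : ∀ j, 0 ≤ q j)
    (h : rowTot q ≠ 0) : (auxNrm p0 q).1 = fun j => q j / rowTot q := by
  simp only [auxNrm]
  rw [if_pos ⟨h0, h⟩]

theorem auxNrm_unique {E : Type*} (p0 : ProbVec E) (q : E → ℝ) (h0 : ∀ j, 0 ≤ q j)
    (h : rowTot q ≠ 0) (ν : ProbVec E) (hν : ∀ j, ν.1 j * rowTot q = q j) :
    ν = auxNrm p0 q := by
  apply Subtype.ext
  rw [auxNrm_val p0 q h0 h]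
  funext j
  rw [eq_div_iff h, hν]

theorem auxNrm_spec {E : Type*} (p0 : ProbVec E) (q : E → ℝ) (h0 : ∀ j, 0 ≤ q j)
    (h : rowTot q ≠ 0) (j : E) : (auxNrm p0 q).1 j * rowTot q = q j := by
  rw [auxNrm_val p0 q h0 h, div_mul_cancel₀ _ h]

theorem auxNrm_meas {E X : Type*} [Countable E] [MeasurableSpace X] (p0 : ProbVec E)
    (u : X → E → ℝ) (hu : Measurable u) (hu0 : ∀ x i, 0 ≤ u x i) :
    Measurable fun x => auxNrm p0 (u x) := by
  have ht : Measurable fun x => rowTot (u x) :=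
    aux_meas_tsum u (fun i => (measurable_pi_apply i).comp hu) hu0
  refine Measurable.subtype_mk ?_
  refine Measurable.ite ?_ ?_ measurable_const
  · have : {x | (∀ j, 0 ≤ u x j) ∧ rowTot (u x) ≠ 0} = (fun x => rowTot (u x)) ⁻¹' {0}ᶜ := by
      ext x; simp [hu0 x]
    rw [this]
    exact ht (measurableSet_singleton 0).compl
  · exact measurable_pi_lambda _ fun j => ((measurable_pi_apply j).comp hu).div ht

theorem aux_filterStep {E F : Type*} (M : F → E → E → ℝ) (hM : ∀ y i j, 0 ≤ M y i j)
    (p0 μ : ProbVec E) (y : F) (h : rowTot (rowMul M μ.1 y) ≠ 0) :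
    filterStep M μ y = auxNrm p0 (rowMul M μ.1 y) := by
  have h0 := aux_rowMul_nonneg M hM μ.1 μ.2.1 y
  have hex : ∃ ν : ProbVec E, ∀ j,
      (ν : E → ℝ) j * rowTot (rowMul M (μ : E → ℝ) y) = rowMul M (μ : E → ℝ) y j :=
    ⟨_, auxNrm_spec p0 _ h0 h⟩
  unfold filterStep
  rw [dif_pos hex]
  exact auxNrm_unique p0 _ h0 h _ hex.choose_spec

theorem aux_filterList {E F : Type*} (M : F → E → E → ℝ) (hM : ∀ y i j, 0 ≤ M y i j)
    (p0 μ : ProbVec E) (l : List F) (h : rowTot (rowIter M μ.1 l) ≠ 0) :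
    filterList M μ l = auxNrm p0 (rowIter M μ.1 l) := by
  have h0 := aux_rowIter_nonneg M hM l μ.1 μ.2.1
  have hex : ∃ ν : ProbVec E, ∀ j,
      (ν : E → ℝ) j * rowTot (rowIter M (μ : E → ℝ) l) = rowIter M (μ : E → ℝ) l j :=
    ⟨_, auxNrm_spec p0 _ h0 h⟩
  unfold filterList
  rw [dif_pos hex]
  exact auxNrm_unique p0 _ h0 h _ hex.choose_spec

theorem aux_rowMul_smul {E F : Type*} (M : F → E → E → ℝ) (p q : E → ℝ) (c : ℝ)
    (h : ∀ j, p j * c = q j) (y : F) (j : E) : rowMul M q y j = rowMul M p y j * c := by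
  unfold rowMul
  rw [← tsum_mul_right]
  refine tsum_congr fun i => ?_
  rw [← h]; ring

theorem aux_rowTot_smul {E F : Type*} (M : F → E → E → ℝ) (p q : E → ℝ) (c : ℝ)
    (h : ∀ j, p j * c = q j) (y : F) :
    rowTot (rowMul M q y) = rowTot (rowMul M p y) * c := by
  unfold rowTot
  rw [← tsum_mul_right]
  exact tsum_congr fun j => aux_rowMul_smul M p q c h y j

/-- key pointwise identity -/
theorem aux_key {E F : Type*} (M : F → E → E → ℝ) (hM : ∀ y i j, 0 ≤ M y i j)
    (p0 : ProbVec E) (q : E → ℝ) (hq : ∀ i, 0 ≤ q i) (h : rowTot q ≠ 0)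
    (f : ProbVec E → ℝ) (y : F) :
    f (auxNrm p0 (rowMul M q y)) * rowTot (rowMul M q y) =
      (f (filterStep M (auxNrm p0 q) y) * rowTot (rowMul M (auxNrm p0 q).1 y)) * rowTot q := by
  have hs := auxNrm_spec p0 q hq h
  rw [aux_rowTot_smul M _ _ _ hs y]
  by_cases hz : rowTot (rowMul M (auxNrm p0 q).1 y) = 0
  · simp [hz]
  · have e : filterStep M (auxNrm p0 q) y = auxNrm p0 (rowMul M q y) := by
      rw [aux_filterStep M hM p0 _ y hz]
      refine auxNrm_unique p0 _ (aux_rowMul_nonneg M hM q hq y) ?_ _ fun j => ?_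
      · rw [aux_rowTot_smul M _ _ _ hs y]; exact mul_ne_zero hz h
      · rw [aux_rowTot_smul M _ _ _ hs y, aux_rowMul_smul M _ _ _ hs y j, ← mul_assoc,
          auxNrm_spec p0 _ (aux_rowMul_nonneg M hM _ (auxNrm p0 q).2.1 y) hz]
    rw [e, mul_assoc]

theorem aux_map {F : Type*} [MeasurableSpace F] (φ : Measure F) [SigmaFinite φ]
    (Q : Measure (ℕ → F)) (n : ℕ) (w : (Fin n → F) → ℝ≥0∞)
    (hQ : ∀ A : Set (Fin n → F), MeasurableSet A →
      Q {y : ℕ → F | (fun k : Fin n => y k) ∈ A} = ∫⁻ v in A, w v ∂(Measure.pi fun _ => φ)) :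
    Q.map (fun (y : ℕ → F) (k : Fin n) => y k) = (Measure.pi fun _ => φ).withDensity w := by
  ext A hA
  rw [Measure.map_apply (measurable_pi_lambda _ fun k => measurable_pi_apply _) hA,
    withDensity_apply _ hA, ← hQ A hA]
  rfl

theorem aux_map_prod {F : Type*} [MeasurableSpace F] (φ : Measure F) [SigmaFinite φ]
    (Q : Measure (ℕ → F)) (n : ℕ) (w : (Fin (n + 1) → F) → ℝ≥0∞) (hw : Measurable w)
    (hQ : Q.map (fun (y : ℕ → F) (k : Fin (n + 1)) => y k) =
      (Measure.pi fun _ => φ).withDensity w)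
    (d : F × (Fin n → F) → ℝ≥0∞) (hd : Measurable d)
    (hdw : ∀ v : Fin (n + 1) → F, d (v (Fin.last n), fun k => v k.castSucc) = w v) :
    Q.map (fun (y : ℕ → F) => (y n, fun k : Fin n => y k)) =
      (φ.prod (Measure.pi fun _ => φ)).withDensity d := by
  have hmp := measurePreserving_piFinSuccAbove (fun _ : Fin (n+1) => φ) (Fin.last n)
  set e := MeasurableEquiv.piFinSuccAbove (fun _ : Fin (n+1) => F) (Fin.last n) with he
  have hee : ∀ v, e v = (v (Fin.last n), fun k : Fin n => v k.castSucc) := by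
    intro v
    simp [he, MeasurableEquiv.piFinSuccAbove, Fin.insertNthEquiv, Fin.removeNth]
    rfl
  have h1 : (fun (y : ℕ → F) => (y n, fun k : Fin n => y k)) =
      e ∘ (fun (y : ℕ → F) (k : Fin (n + 1)) => y k) := by
    funext y
    simp [hee]
  rw [h1, ← Measure.map_map e.measurable
    (measurable_pi_lambda _ fun k => measurable_pi_apply _), hQ]
  ext B hB
  rw [Measure.map_apply e.measurable hB, withDensity_apply _ hB,
    withDensity_apply _ (e.measurable hB), ← hmp.map_eq, Measure.restrict_map e.measurable hB,
    lintegral_map hd e.measurable]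
  refine lintegral_congr fun v => ?_
  rw [hee, hdw]

theorem filter_is_markov_chain_with_kernel
    {E : Type*} [Countable E] [Nonempty E] [DecidableEq E]
    {F : Type*} [TopologicalSpace F] [PolishSpace F] [MeasurableSpace F] [BorelSpace F]
    (φ : Measure F) [SigmaFinite φ]
    (M : F → E → E → ℝ)
    (hMmeas : ∀ i j, Measurable fun y => M y i j)
    (hMnn : ∀ y i j, 0 ≤ M y i j)
    (hMbd : ∀ᵐ y ∂φ, ∃ C : ℝ, ∀ (i : E) (s : Finset E), ∑ j ∈ s, M y i j ≤ C)
    (hPtrans : ∀ i, HasSum (fun j => transMat M φ i j) 1)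
    (hPirr : ∀ i j : E, ∃ n : ℕ, 0 < matPow (transMat M φ) n i j)
    (lam : ProbVec E)
    (hlamInv : ∀ j, ∑' i, (lam : E → ℝ) i * transMat M φ i j = (lam : E → ℝ) j)
    (hlamUniq : ∀ ρ : ProbVec E,
      (∀ j, ∑' i, (ρ : E → ℝ) i * transMat M φ i j = (ρ : E → ℝ) j) → ρ = lam)
    (Q : ProbVec E → Measure (ℕ → F))
    (hQprob : ∀ μ, IsProbabilityMeasure (Q μ))
    (hQ : ∀ (μ : ProbVec E) (n : ℕ) (A : Set (Fin n → F)), MeasurableSet A →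
      Q μ {y : ℕ → F | (fun k : Fin n => y k) ∈ A} =
        ∫⁻ v in A, ENNReal.ofReal (rowTot (rowIter M (μ : E → ℝ) (List.ofFn v)))
          ∂(Measure.pi fun _ => φ))
    :
    ∀ (μ : ProbVec E) (n : ℕ) (f : ProbVec E → ℝ), IsBddCont f →
      (Q μ)[(fun y => f (filterSeq M μ y (n + 1)))|MeasurableSpace.comap
          (fun y : ℕ → F => fun k : Fin n => y k) MeasurableSpace.pi]
        =ᵐ[Q μ] fun y => filterKernel M φ f (filterSeq M μ y n) := by
  intro μ n f ⟨hfc, C, hC⟩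
  have := hQprob μ
  have hfm : Measurable f := hfc.measurable
  -- basic objects
  set p : (Fin n → F) → E → ℝ := fun v => rowIter M μ.1 (List.ofFn v) with hp
  have hpm : Measurable p := aux_rowIter_meas M hMmeas hMnn μ.1 μ.2.1 n
  have hp0 : ∀ v i, 0 ≤ p v i := fun v => aux_rowIter_nonneg M hMnn _ μ.1 μ.2.1
  set w : (Fin n → F) → ℝ := fun v => rowTot (p v) with hw
  have hwm : Measurable w :=
    aux_meas_tsum p (fun i => (measurable_pi_apply i).comp hpm) hp0
  have hw0 : ∀ v, 0 ≤ w v := fun v => aux_rowTot_nonneg _ (hp0 v)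
  set r : F × (Fin n → F) → E → ℝ := fun z => rowMul M (p z.2) z.1 with hr
  have hrm : Measurable r := aux_rowMul_meas M hMmeas hMnn (fun z : F × (Fin n → F) => p z.2)
    (hpm.comp measurable_snd) (fun z i => hp0 _ i) Prod.fst measurable_fst
  have hr0 : ∀ z i, 0 ≤ r z i := fun z => aux_rowMul_nonneg M hMnn _ (hp0 _) _
  set d : F × (Fin n → F) → ℝ := fun z => rowTot (r z) with hd
  have hdm : Measurable d :=
    aux_meas_tsum r (fun i => (measurable_pi_apply i).comp hrm) hr0
  have hd0 : ∀ v, 0 ≤ d v := fun v => aux_rowTot_nonneg _ (hr0 v)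
  set T : (ℕ → F) → (Fin n → F) := fun y k => y k with hT
  have hTm : Measurable T := measurable_pi_lambda _ fun k => measurable_pi_apply _
  set S : (ℕ → F) → F × (Fin n → F) := fun y => (y n, T y) with hS
  have hSm : Measurable S := (measurable_pi_apply n).prodMk hTm
  have hmapT : (Q μ).map T = (Measure.pi fun _ => φ).withDensity fun v => ENNReal.ofReal (w v) :=
    aux_map φ (Q μ) n _ (hQ μ n)
  have hmapS : (Q μ).map S = (φ.prod (Measure.pi fun _ => φ)).withDensity
      fun z => ENNReal.ofReal (d z) := by
    refine aux_map_prod φ (Q μ) n _ ?_ (aux_map φ (Q μ) (n+1) _ (hQ μ (n+1))) _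
      hdm.ennreal_ofReal ?_
    · exact (aux_meas_tsum _ (fun i => (measurable_pi_apply i).comp
        (aux_rowIter_meas M hMmeas hMnn μ.1 μ.2.1 (n+1)))
        (fun v => aux_rowIter_nonneg M hMnn _ μ.1 μ.2.1)).ennreal_ofReal
    · intro v
      simp only [hd, hr, hp]
      rw [aux_rowIter_snoc]
  -- almost sure positivity
  have hposT : ∀ᵐ y ∂(Q μ), w (T y) ≠ 0 := by
    have h : ∀ᵐ v ∂((Q μ).map T), w v ≠ 0 := by
      rw [hmapT, ae_withDensity_iff hwm.ennreal_ofReal]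
      filter_upwards with v hv h0
      simp [h0] at hv
    exact ae_of_ae_map hTm.aemeasurable h
  have hposS : ∀ᵐ y ∂(Q μ), d (S y) ≠ 0 := by
    have h : ∀ᵐ v ∂((Q μ).map S), d v ≠ 0 := by
      rw [hmapS, ae_withDensity_iff hdm.ennreal_ofReal]
      filter_upwards with v hv h0
      simp [h0] at hv
    exact ae_of_ae_map hSm.aemeasurable h
  -- the measurable versions
  set H : F × (Fin n → F) → ℝ := fun z => f (auxNrm μ (r z)) with hH
  have hHm : Measurable H := hfm.comp (auxNrm_meas μ r hrm hr0)
  have hf1 : (fun y => f (filterSeq M μ y (n + 1))) =ᵐ[Q μ] fun y => H (S y) := by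
    filter_upwards [hposS] with y hy
    have e : rowIter M μ.1 (List.ofFn fun k : Fin (n+1) => y k) = r (S y) := by
      rw [aux_rowIter_snoc]; simp [hr, hp, hS, hT]
    simp only [filterSeq, hH]
    rw [aux_filterList M hMnn μ μ _ (by rw [e]; exact hy), e]
  set G : (Fin n → F) → ℝ := fun v => (∫ y, H (y, v) * d (y, v) ∂φ) * (w v)⁻¹ with hG
  have hGm : StronglyMeasurable G := by
    refine StronglyMeasurable.mul ?_ hwm.inv.stronglyMeasurable
    exact (hHm.mul hdm).stronglyMeasurable.integral_prod_left'
  have hg1 : (fun y => filterKernel M φ f (filterSeq M μ y n)) =ᵐ[Q μ] fun y => G (T y) := by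
    filter_upwards [hposT] with y hy
    have e1 : filterSeq M μ y n = auxNrm μ (p (T y)) :=
      aux_filterList M hMnn μ μ _ hy
    rw [e1]
    simp only [hG, hH, hd, hr]
    simp_rw [aux_key M hMnn μ (p (T y)) (hp0 _) hy f]
    rw [integral_mul_const, mul_assoc, mul_inv_cancel₀ hy, mul_one]
    rfl
  -- integrability
  have hHS : Integrable (fun y => H (S y)) (Q μ) :=
    Integrable.of_bound (hHm.comp hSm).aestronglyMeasurable C
      (Filter.Eventually.of_forall fun y => hC _)
  have hprodint : Integrable (fun z => H z * d z) (φ.prod (Measure.pi fun _ => φ)) := by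
    have h1 : Integrable H ((Q μ).map S) :=
      (integrable_map_measure hHm.aestronglyMeasurable hSm.aemeasurable).2 hHS
    rw [hmapS, integrable_withDensity_iff_integrable_smul' hdm.ennreal_ofReal
      (Filter.Eventually.of_forall fun z => ENNReal.ofReal_lt_top)] at h1
    refine h1.congr (Filter.Eventually.of_forall fun z => ?_)
    simp [ENNReal.toReal_ofReal (hd0 z), mul_comm]
  have hGint : Integrable (fun y => G (T y)) (Q μ) := by
    have h1 : Integrable G ((Q μ).map T) := by
      rw [hmapT, integrable_withDensity_iff_integrable_smul' hwm.ennreal_ofReal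
        (Filter.Eventually.of_forall fun z => ENNReal.ofReal_lt_top)]
      refine hprodint.integral_prod_right.mono
        (hwm.ennreal_ofReal.ennreal_toReal.aestronglyMeasurable.smul hGm.aestronglyMeasurable)
        (Filter.Eventually.of_forall fun v => ?_)
      simp only [ENNReal.toReal_ofReal (hw0 v), hG, smul_eq_mul]
      by_cases hz : w v = 0
      · simp [hz]
      · rw [mul_comm, mul_assoc, inv_mul_cancel₀ hz, mul_one]
    exact (integrable_map_measure hGm.aestronglyMeasurable hTm.aemeasurable).1 h1
  refine (condExp_congr_ae hf1).trans (Filter.EventuallyEq.trans ?_ hg1.symm)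
  symm
  refine ae_eq_condExp_of_forall_setIntegral_eq hTm.comap_le hHS
    (fun s _ _ => hGint.integrableOn) ?_ ?_
  · rintro s ⟨A, hA, rfl⟩ -
    set B : Set (Fin n → F) := A ∩ {v | w v ≠ 0} with hB
    have hBm : MeasurableSet B := hA.inter (hwm (measurableSet_singleton 0).compl)
    have hAB : T ⁻¹' A =ᵐ[Q μ] T ⁻¹' B := by
      filter_upwards [hposT] with y hy
      have : (y ∈ T ⁻¹' A) = (y ∈ T ⁻¹' B) := by simp [hB, hy]
      exact this
    rw [setIntegral_congr_set hAB, setIntegral_congr_set hAB]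
    have hL : ∫ y in T ⁻¹' B, G (T y) ∂(Q μ) =
        ∫ v in B, (∫ y, H (y, v) * d (y, v) ∂φ) ∂(Measure.pi fun _ => φ) := by
      rw [← setIntegral_map hBm hGm.aestronglyMeasurable hTm.aemeasurable, hmapT,
        setIntegral_withDensity_eq_setIntegral_toReal_smul hwm.ennreal_ofReal
          (Filter.Eventually.of_forall fun z => ENNReal.ofReal_lt_top) _ hBm]
      refine setIntegral_congr_fun hBm fun v hv => ?_
      have hz : w v ≠ 0 := hv.2
      simp only [ENNReal.toReal_ofReal (hw0 v), hG, smul_eq_mul]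
      rw [mul_comm, mul_assoc, inv_mul_cancel₀ hz, mul_one]
    have hR : ∫ y in T ⁻¹' B, H (S y) ∂(Q μ) =
        ∫ v in B, (∫ y, H (y, v) * d (y, v) ∂φ) ∂(Measure.pi fun _ => φ) := by
      have hBB : T ⁻¹' B = S ⁻¹' (Set.univ ×ˢ B) := by ext y; simp [hS]
      have hm : MeasurableSet ((Set.univ : Set F) ×ˢ B) := MeasurableSet.univ.prod hBm
      rw [hBB, ← setIntegral_map hm hHm.aestronglyMeasurable hSm.aemeasurable, hmapS,
        setIntegral_withDensity_eq_setIntegral_toReal_smul hdm.ennreal_ofReal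
          (Filter.Eventually.of_forall fun z => ENNReal.ofReal_lt_top) _ hm]
      have : ∀ z, (ENNReal.ofReal (d z)).toReal • H z = H z * d z := fun z => by
        simp [ENNReal.toReal_ofReal (hd0 z), mul_comm]
      simp_rw [this]
      rw [← Measure.prod_restrict, Measure.restrict_univ, integral_prod_symm]
      have := hprodint.integrableOn (s := Set.univ ×ˢ B)
      rwa [IntegrableOn, ← Measure.prod_restrict, Measure.restrict_univ] at this
    rw [hL, hR]
  · exact (hGm.comp_measurable (comap_measurable T)).aestronglyMeasurable
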